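/- arXiv:2407.12685 — 2 statements merged into one kernel-verified Lean document; each statement's English description precedes it below -/
import Mathlib

section
/- Let n ≥ 2 and let P be a polynomial of type (◇) in n variables satisfying det M_P = P^{2n−1} as an identity of polynomials. Then for every i ∈ {1,…,n} there exists a positive integer k_i such that the restriction of P to the i-th coordinate axis satisfies P(0,…,0,t,0,…,0) = (1 + t/k_i)^{k_i} for all t, and for every j ≠ i there exists h_{ij} ∈ ℕ such that ∂P/∂x_j(0,…,0,t,0,…,0) = (1 + t/k_i)^{h_{ij}} for all t (with t in the i-th slot). Moreover these integers satisfy Σ_{α≠i} h_{iα} = k_i(n−2) + 2 for every i, and h_{ij}·k_j = h_{ji}·k_i for all i ≠ j. -/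
/-!
Restrict everything to the `i`-th coordinate axis. There every row `α ≠ i` of `M_P` is diagonal,
with diagonal entry `p · p_α`, where `p(t) = P(t eᵢ)` and `p_α(t) = ∂_α P(t eᵢ)`. The equation
`det M_P = P^(2n-1)` therefore becomes

  `q · ∏_{α ≠ i} p_α = p ^ n`,  where `q = t (p p'' - p'²) + p p' = p² (t p' / p)'`.

In particular `q` divides a power of `p`, and this forces `p` to be a power of a linear polynomial
(`eq_linear_pow`). To see it, let `ρ` be the radical of `p`, write `p = g ρ` and `p' = g a`; then `a`
is coprime to `ρ` (`isCoprime_of_radical`), and `q = g² N` with `N = (t a)' ρ - t a ρ'`. As `ρ` is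
separable and `ρ(0) ≠ 0`, `N` is coprime to `ρ`, hence to `p`; since it divides a power of `p`, it is
constant. Now `0 = N' = (t a)'' ρ - t a ρ''`, so `ρ ∣ ρ''`, which is only possible when `ρ'' = 0`,
that is, when `ρ` is linear. The normalisations `p(0) = p'(0) = 1` give `p = (1 + t/k)^k`.

The factors `p_α` divide a power of the prime `1 + t/k` and have value `1` at `0`, so they are powers
of it. For `p = (1 + t/k)^k` one has `(1 + t/k)² q = p²`, and comparing degrees in the restricted
equation gives `∑ h_{iα} = k_i (n - 2) + 2`. Finally `h_{ij} / k_i = ∂_i ∂_j P(0) = h_{ji} / k_j`.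
-/

open Real

/-- `P` is a polynomial of type (◇): every multi-index of length `≤ 1` appears with
coefficient `1`, and every coefficient in the support is positive. -/
def IsTypeDiamond {n : ℕ} (P : MvPolynomial (Fin n) ℝ) : Prop :=
  (∀ d : Fin n →₀ ℕ, (∑ i, d i) ≤ 1 → MvPolynomial.coeff d P = 1) ∧
  (∀ d ∈ P.support, 0 < MvPolynomial.coeff d P)

/-- The matrix `M_P` with entries
`x_α·(P·∂²P/∂x_α∂x_β − ∂P/∂x_α·∂P/∂x_β) + δ_{αβ}·P·∂P/∂x_α`. -/
noncomputable def MPmat {n : ℕ} (P : MvPolynomial (Fin n) ℝ) :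
    Matrix (Fin n) (Fin n) (MvPolynomial (Fin n) ℝ) :=
  Matrix.of fun α β =>
    MvPolynomial.X α *
        (P * MvPolynomial.pderiv β (MvPolynomial.pderiv α P) -
          MvPolynomial.pderiv α P * MvPolynomial.pderiv β P) +
      (if α = β then P * MvPolynomial.pderiv α P else 0)

/-! ### Polynomials in one variable -/

open Polynomial in
/-- The linear polynomial `1 + t / k`. -/
noncomputable def axisFactor (k : ℕ) : ℝ[X] := 1 + C (k : ℝ)⁻¹ * X

section univariate

open Polynomial UniqueFactorizationMonoid EuclideanDomain

lemma eval_axisFactor (k : ℕ) (t : ℝ) : (axisFactor k).eval t = 1 + t / k := by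
  simp [axisFactor]; ring

lemma derivative_axisFactor (k : ℕ) : derivative (axisFactor k) = C (k : ℝ)⁻¹ := by
  simp [axisFactor]

lemma natDegree_axisFactor {k : ℕ} (hk : 0 < k) : (axisFactor k).natDegree = 1 := by
  have h : (k : ℝ)⁻¹ ≠ 0 := by positivity
  rw [axisFactor, add_comm, ← C_1]
  exact natDegree_linear h

lemma prime_axisFactor {k : ℕ} (hk : 0 < k) : Prime (axisFactor k) := by
  apply Polynomial.prime_of_degree_eq_one
  exact (degree_eq_iff_natDegree_eq_of_pos one_pos).2 (natDegree_axisFactor hk)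

lemma eval_derivative_axisFactor_pow (k h : ℕ) :
    (derivative (axisFactor k ^ h)).eval 0 = h * (k : ℝ)⁻¹ := by
  rw [derivative_pow, derivative_axisFactor]
  simp [eval_axisFactor]

lemma eq_axisFactor_pow_of_dvd {k m : ℕ} (hk : 0 < k) {r : ℝ[X]} (h0 : r.eval 0 = 1)
    (h : r ∣ axisFactor k ^ m) : ∃ j, r = axisFactor k ^ j := by
  obtain ⟨j, -, u, hu⟩ := (dvd_prime_pow (prime_axisFactor hk) m).1 h
  refine ⟨j, ?_⟩
  obtain ⟨c, hc, hcu⟩ := Polynomial.isUnit_iff.1 u.isUnit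
  rw [← hcu] at hu
  have := congrArg (Polynomial.eval 0) hu
  simp [h0, eval_axisFactor] at this
  rw [← hu, this]; simp

/-- A prime dividing `p` exactly `m` times divides `p'` exactly `m - 1` times. Since `p / radical p`
takes up `m - 1` of these factors, nothing is left for `a`. -/
lemma isCoprime_of_radical {p g a : ℝ[X]} (hp : p ≠ 0) (hg : p = g * radical p)
    (ha : derivative p = g * a) : IsCoprime a (radical p) := by
  refine isCoprime_of_prime_dvd (fun h => radical_ne_zero h.2) ?_
  intro z hz hza hzr
  have hzp : z ∣ p := hzr.trans radical_dvd_self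
  obtain ⟨u, hu, hzu⟩ :=
    (FiniteMultiplicity.of_prime_left hz hp).exists_eq_pow_mul_and_not_dvd
  set m := multiplicity z p
  obtain ⟨l, hl⟩ : ∃ l, m = l + 1 := by
    cases hm : m with
    | zero => rw [hm] at hu; simp at hu; exact absurd (hu ▸ hzp) hzu
    | succ l => exact ⟨l, rfl⟩
  rw [hl] at hu
  obtain ⟨s, hs⟩ := hzr
  have hzs : ¬ z ∣ s := by
    rintro ⟨w, rfl⟩
    exact hz.not_isUnit (squarefree_radical z ⟨w, by rw [hs]; ring⟩)
  have hgs : z ^ l * u = g * s := by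
    apply mul_left_cancel₀ hz.ne_zero
    rw [hs] at hg
    linear_combination hg - hu
  have hzg : z ^ l ∣ g := hz.pow_dvd_of_dvd_mul_right l hzs ⟨u, hgs.symm⟩
  obtain ⟨b, rfl⟩ := hza
  obtain ⟨v, rfl⟩ := hzg
  have hder : derivative p = z ^ l * (((l : ℝ[X]) + 1) * derivative z * u + z * derivative u) := by
    rw [hu, derivative_mul, derivative_pow]
    simp
    ring
  rw [ha, mul_assoc] at hder
  have h1 := mul_left_cancel₀ (pow_ne_zero l hz.ne_zero) hder
  have h2 : z ∣ ((l : ℝ[X]) + 1) * derivative z * u :=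
    ⟨v * b - derivative u, by linear_combination -h1⟩
  rcases hz.dvd_or_dvd h2 with h3 | h3
  · rcases hz.dvd_or_dvd h3 with h4 | h4
    · have h5 : (l : ℝ[X]) + 1 = C ((l : ℝ) + 1) := by simp
      rw [h5] at h4
      refine hz.not_isUnit (isUnit_of_dvd_unit h4 (isUnit_C.2 ?_))
      exact isUnit_iff_ne_zero.2 (by positivity)
    · have h5 := derivative_eq_zero.1 (dvd_derivative_iff.1 h4)
      exact hz.irreducible.natDegree_pos.ne' h5
  · exact hzu h3

/-- If `p² (t p' / p)'` divides a power of `p`, then the radical of `p` has degree at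
most `1`. -/
lemma radical_natDegree_le_one {p r : ℝ[X]} {m : ℕ} (hp0 : p.eval 0 = 1)
    (h : (X * (p * derivative (derivative p) - derivative p * derivative p) + p * derivative p) * r
      = p ^ m) : (radical p).natDegree ≤ 1 := by
  have hp : p ≠ 0 := by rintro rfl; simp at hp0
  have hg : p = divRadical p * radical p := (divRadical_mul_radical).symm
  obtain ⟨a, ha⟩ := divRadical_dvd_derivative p
  have hco := isCoprime_of_radical hp hg ha
  obtain ⟨e, he⟩ := exists_dvd_radical_self_pow hp
  have hsq : Squarefree (radical p) := squarefree_radical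
  have hsep : IsCoprime (radical p) (derivative (radical p)) :=
    PerfectField.separable_iff_squarefree.2 hsq
  set g := divRadical p
  set ρ := radical p
  have hX : IsCoprime X ρ := by
    rw [Prime.coprime_iff_not_dvd Polynomial.prime_X, X_dvd_iff, coeff_zero_eq_eval_zero]
    intro h0
    rw [hg] at hp0
    simp [h0] at hp0
  have hXa : IsCoprime (X * a) ρ := hX.mul_left hco
  set N := derivative (X * a) * ρ - X * a * derivative ρ with hN
  have hNρ : IsCoprime N ρ := by
    have h1 : IsCoprime (-(X * a * derivative ρ)) ρ := (hXa.mul_left hsep.symm).neg_left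
    have := h1.add_mul_right_left (derivative (X * a))
    rwa [neg_add_eq_sub] at this
  have hq : X * (p * derivative (derivative p) - derivative p * derivative p) + p * derivative p
      = g ^ 2 * N := by
    -- Differentiating `p = g ρ` and `p' = g a` yields two expressions for `p'` and one for `p''`.
    have h1 : derivative p = derivative g * ρ + g * derivative ρ := by
      conv_lhs => rw [hg]
      rw [derivative_mul]
    have h2 : derivative (derivative p) = derivative g * a + g * derivative a := by
      rw [ha, derivative_mul]
    have h3 : derivative g * ρ = g * a - g * derivative ρ := by
      linear_combination ha - h1
    rw [h2, ha, hN, derivative_mul, derivative_X]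
    conv_lhs => rw [hg]
    linear_combination (X * g * a) * h3
  have hNunit : IsUnit N := by
    have h1 : IsCoprime N (p ^ m) :=
      ((hNρ.pow_right (n := e)).of_isCoprime_of_dvd_right he).pow_right
    refine h1.isUnit_of_dvd' dvd_rfl ⟨g ^ 2 * r, ?_⟩
    rw [← h, hq]; ring
  have hder : derivative (derivative (X * a)) * ρ = X * a * derivative (derivative ρ) := by
    obtain ⟨c, -, hc⟩ := Polynomial.isUnit_iff.1 hNunit
    have h1 : derivative N = 0 := by rw [← hc, derivative_C]
    rw [hN, derivative_sub, derivative_mul (f := derivative (X * a)),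
      derivative_mul (f := X * a)] at h1
    linear_combination h1
  have hdvd : ρ ∣ derivative (derivative ρ) :=
    hXa.symm.dvd_of_dvd_mul_left ⟨_, hder.symm.trans (mul_comm _ _)⟩
  by_contra! hlt
  have h0 : derivative (derivative ρ) = 0 := by
    by_contra hne
    have h1 := natDegree_le_of_dvd hdvd hne
    have h2 := natDegree_derivative_le (derivative ρ)
    have h3 := natDegree_derivative_le ρ
    omega
  have h1 := derivative_eq_zero.1 h0
  rw [natDegree_derivative] at h1
  omega

lemma eq_linear_pow {p r : ℝ[X]} {m : ℕ} (hp0 : p.eval 0 = 1) (hp1 : (derivative p).eval 0 = 1)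
    (h : (X * (p * derivative (derivative p) - derivative p * derivative p) + p * derivative p) * r
      = p ^ m) : ∃ k : ℕ, 0 < k ∧ p = axisFactor k ^ k := by
  have hp : p ≠ 0 := by rintro rfl; simp at hp0
  have hle := radical_natDegree_le_one hp0 h
  obtain ⟨e, he⟩ := exists_dvd_radical_self_pow hp
  have hd : radical p ∣ p := radical_dvd_self
  set ρ := radical p
  obtain ⟨c, b, hρ⟩ := exists_eq_X_add_C_of_natDegree_le_one hle
  have hb : b ≠ 0 := by
    rintro rfl
    obtain ⟨s, hs⟩ := hd
    rw [hs, hρ] at hp0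
    simp at hp0
  have hc : c ≠ 0 := by
    rintro rfl
    have hu : IsUnit (ρ ^ e) := by
      rw [hρ]; simpa using (isUnit_C.2 (isUnit_iff_ne_zero.2 hb)).pow e
    obtain ⟨d, -, hd⟩ := Polynomial.isUnit_iff.1 (isUnit_of_dvd_unit he hu)
    rw [← hd] at hp1
    simp at hp1
  have hprime : Prime ρ := by
    apply Polynomial.prime_of_degree_eq_one
    rw [hρ]; exact degree_linear hc
  obtain ⟨k, -, u, hu⟩ := (dvd_prime_pow hprime e).1 he
  obtain ⟨w, hw, hwu⟩ := Polynomial.isUnit_iff.1 u⁻¹.isUnit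
  have hpk : p = C w * ρ ^ k := by rw [hwu, ← hu]; simp [mul_comm]
  have h0 : w * b ^ k = 1 := by
    have := hp0
    rw [hpk, hρ] at this
    simpa using this
  have hk1 : (k : ℝ) * (c / b) = 1 := by
    have := hp1
    rw [hpk, hρ, derivative_C_mul, derivative_pow] at this
    simp at this
    rcases k with _ | k
    · simp at this
    · simp only [Nat.add_sub_cancel] at this
      rw [pow_succ] at h0
      field_simp
      push_cast at this ⊢
      linear_combination b * this - (k + 1) * c * h0
  have hk : 0 < k := by
    rcases Nat.eq_zero_or_pos k with rfl | h
    · simp at hk1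
    · exact h
  refine ⟨k, hk, ?_⟩
  have hcb : c = b * (k : ℝ)⁻¹ := by
    field_simp at hk1 ⊢
    linarith
  have hρ' : ρ = C b * axisFactor k := by
    rw [hρ, hcb, axisFactor, C_mul]; ring
  rw [hpk, hρ', mul_pow, ← mul_assoc, ← C_pow, ← C_mul, h0, C_1, one_mul]

/-- For `p = ℓ^k` with `ℓ = 1 + t/k`, one has `ℓ² · p² (t p' / p)' = p²`. -/
lemma axisFactor_sq_mul {k : ℕ} (hk : 0 < k) {p : ℝ[X]} (hp : p = axisFactor k ^ k) :
    axisFactor k ^ 2 *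
      (X * (p * derivative (derivative p) - derivative p * derivative p) + p * derivative p)
      = p ^ 2 := by
  have hk0 : (k : ℝ) ≠ 0 := by positivity
  have h1 : axisFactor k * derivative p = p := by
    obtain ⟨l, rfl⟩ : ∃ l, k = l + 1 := ⟨k - 1, by omega⟩
    rw [hp, derivative_pow, derivative_axisFactor, Nat.add_sub_cancel]
    have h2 : C ((l + 1 : ℕ) : ℝ) * C ((l + 1 : ℕ) : ℝ)⁻¹ = 1 := by
      rw [← C_mul, mul_inv_cancel₀ hk0, C_1]
    linear_combination (axisFactor (l + 1) ^ (l + 1)) * h2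
  have h2 : C (k : ℝ)⁻¹ * derivative p + axisFactor k * derivative (derivative p)
      = derivative p := by
    have := congrArg derivative h1
    rwa [derivative_mul, derivative_axisFactor] at this
  have h3 : axisFactor k = 1 + C (k : ℝ)⁻¹ * X := rfl
  generalize derivative (derivative p) = p2 at *
  generalize derivative p = p1 at *
  generalize axisFactor k = ℓ at *
  generalize C (k : ℝ)⁻¹ = κ at *
  linear_combination (X * p * ℓ) * h2 +
    (p * ℓ - κ * X * p + X * p - X * (ℓ * p1 + p)) * h1 + p ^ 2 * h3

end univariate

/-! ### Restriction to a coordinate axis -/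

section restriction

open MvPolynomial

variable {n : ℕ}

/-- Restriction of a polynomial to the `i`-th coordinate axis, as a polynomial in one variable. -/
noncomputable def axisRestrict (i : Fin n) : MvPolynomial (Fin n) ℝ →ₐ[ℝ] Polynomial ℝ :=
  aeval (Pi.single i Polynomial.X)

lemma eval_axisRestrict (i : Fin n) (t : ℝ) (Q : MvPolynomial (Fin n) ℝ) :
    (axisRestrict i Q).eval t = eval (Pi.single i t) Q := by
  induction Q using MvPolynomial.induction_on with
  | C a => simp [axisRestrict]
  | add p q hp hq => simp [hp, hq]
  | mul_X p j hp =>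
    rw [map_mul, Polynomial.eval_mul, hp, map_mul]
    by_cases h : j = i
    · subst h; simp [axisRestrict]
    · simp [axisRestrict, h]

lemma derivative_axisRestrict (i : Fin n) (Q : MvPolynomial (Fin n) ℝ) :
    Polynomial.derivative (axisRestrict i Q) = axisRestrict i (pderiv i Q) := by
  induction Q using MvPolynomial.induction_on with
  | C a => simp [axisRestrict]
  | add p q hp hq => simp [hp, hq]
  | mul_X p j hp =>
    rw [map_mul, Polynomial.derivative_mul, hp, pderiv_mul, map_add, map_mul, map_mul]
    by_cases h : j = i
    · subst h; simp [axisRestrict]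
    · simp [axisRestrict, h, pderiv_X_of_ne h]

lemma eval_zero_axisRestrict (i : Fin n) (Q : MvPolynomial (Fin n) ℝ) :
    (axisRestrict i Q).eval 0 = coeff 0 Q := by
  rw [eval_axisRestrict, Pi.single_zero, eval_zero, constantCoeff_eq]

lemma coeff_zero_pderiv (i : Fin n) (Q : MvPolynomial (Fin n) ℝ) :
    coeff 0 (pderiv i Q) = coeff (Finsupp.single i 1) Q := by
  rw [coeff_pderiv]; simp

end restriction

/-- The determinant of a matrix all of whose rows, except possibly row `i`, are diagonal. -/
lemma det_of_rows_diagonal {R ι : Type*} [CommRing R] [Fintype ι] [DecidableEq ι]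
    (A : Matrix ι ι R) (i : ι) (h : ∀ a b, a ≠ i → a ≠ b → A a b = 0) :
    A.det = ∏ a, A a a := by
  rw [Matrix.det_apply, Finset.sum_eq_single 1]
  · simp
  · intro σ _ hσ
    -- A nontrivial permutation moves some index other than `i`.
    obtain ⟨a, hai, ha⟩ : ∃ a, σ a ≠ i ∧ σ a ≠ a := by
      by_contra! hcon
      apply hσ
      ext a
      by_cases hai : σ a = i
      · by_cases hi : σ i = i
        · simp only [Equiv.Perm.coe_one, id]
          exact hai.trans (σ.injective (hai.trans hi.symm)).symm
        · exact absurd (hcon i hi) hi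
      · simpa using hcon a hai
    have hzero : ∏ b, A (σ b) b = 0 :=
      Finset.prod_eq_zero (Finset.mem_univ a) (h _ _ hai ha)
    rw [hzero, smul_zero]
  · simp

/-- The equation `det M_P = P^(2n-1)` on the `i`-th axis, after cancelling `n - 1` factors `p`. -/
lemma axis_equation {n : ℕ} {P : MvPolynomial (Fin n) ℝ} (hP : IsTypeDiamond P)
    (heq : (MPmat P).det = P ^ (2 * n - 1)) (i : Fin n) {p : Polynomial ℝ}
    (hp : axisRestrict i P = p) :
    (Polynomial.X * (p * p.derivative.derivative - p.derivative * p.derivative)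
        + p * p.derivative)
      * ∏ α ∈ Finset.univ.erase i, axisRestrict i (MvPolynomial.pderiv α P) = p ^ n := by
  have hp0 : p ≠ 0 := by
    rintro rfl
    have h1 := eval_zero_axisRestrict i P
    rw [hp, hP.1 0 (by simp)] at h1
    simp at h1
  have hdet := congrArg (axisRestrict i) heq
  rw [AlgHom.map_det, map_pow, hp,
    det_of_rows_diagonal _ i (by
      intro a b hai hab
      simp [MPmat, axisRestrict, hai, hab]),
    ← Finset.mul_prod_erase _ _ (Finset.mem_univ i)] at hdet
  have hrows : ∀ α ∈ Finset.univ.erase i, ((axisRestrict i).mapMatrix (MPmat P)) α α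
      = p * axisRestrict i (MvPolynomial.pderiv α P) := by
    intro α hα
    have hα' : α ≠ i := Finset.ne_of_mem_erase hα
    have hX : axisRestrict i (MvPolynomial.X α) = 0 := by simp [axisRestrict, hα']
    simp [MPmat, hX, hp]
  have hrow : ((axisRestrict i).mapMatrix (MPmat P)) i i
      = Polynomial.X * (p * p.derivative.derivative - p.derivative * p.derivative)
        + p * p.derivative := by
    have hX : axisRestrict i (MvPolynomial.X i) = Polynomial.X := by simp [axisRestrict]
    rw [← hp]
    simp [MPmat, hX, derivative_axisRestrict]
  rw [hrow, Finset.prod_congr rfl hrows, Finset.prod_mul_distrib, Finset.prod_const,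
    Finset.card_erase_of_mem (Finset.mem_univ i), Finset.card_univ, Fintype.card_fin] at hdet
  have hn : 0 < n := i.pos
  have hsplit : p ^ (2 * n - 1) = p ^ (n - 1) * p ^ n := by
    rw [← pow_add]; congr 1; omega
  apply mul_left_cancel₀ (pow_ne_zero (n - 1) hp0)
  rw [← hsplit, ← hdet]; ring

/-- restrictions to the coordinate axes of a type (◇) solution of
`det M_P = P^{2n−1}`: `P(0,…,t,…,0) = (1 + t/k_i)^{k_i}`,
`∂P/∂x_j(0,…,t,…,0) = (1 + t/k_i)^{h_{ij}}`, with `∑_{α≠i} h_{iα} = k_i(n−2) + 2` and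
`h_{ij} k_j = h_{ji} k_i`. -/
theorem stmt13 {n : ℕ} (hn : 2 ≤ n) (P : MvPolynomial (Fin n) ℝ) (hP : IsTypeDiamond P)
    (heq : (MPmat P).det = P ^ (2 * n - 1)) :
    ∃ (k : Fin n → ℕ) (H : Fin n → Fin n → ℕ),
      (∀ i, 0 < k i) ∧
      (∀ i, ∀ t : ℝ,
        MvPolynomial.eval (Pi.single i t) P = (1 + t / (k i : ℝ)) ^ (k i)) ∧
      (∀ i j, j ≠ i → ∀ t : ℝ,
        MvPolynomial.eval (Pi.single i t) (MvPolynomial.pderiv j P) =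
          (1 + t / (k i : ℝ)) ^ (H i j)) ∧
      (∀ i, ∑ α ∈ Finset.univ.erase i, H i α = k i * (n - 2) + 2) ∧
      (∀ i j, i ≠ j → H i j * k j = H j i * k i) := by
  have hcoeff0 : MvPolynomial.coeff 0 P = 1 := hP.1 0 (by simp)
  have hcoeff1 : ∀ j, MvPolynomial.coeff (Finsupp.single j 1) P = 1 := fun j =>
    hP.1 _ (by simp [Finsupp.single_apply])
  have hpk : ∀ i, ∃ k : ℕ, 0 < k ∧ axisRestrict i P = axisFactor k ^ k := fun i =>
    eq_linear_pow (by rw [eval_zero_axisRestrict, hcoeff0])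
      (by rw [derivative_axisRestrict, eval_zero_axisRestrict, coeff_zero_pderiv, hcoeff1])
      (axis_equation hP heq i rfl)
  choose k hk hPk using hpk
  have hph : ∀ i j, ∃ h : ℕ, j ≠ i →
      axisRestrict i (MvPolynomial.pderiv j P) = axisFactor (k i) ^ h := by
    intro i j
    by_cases hji : j = i
    · exact ⟨0, fun h => absurd hji h⟩
    have hdvd : axisRestrict i (MvPolynomial.pderiv j P) ∣ axisFactor (k i) ^ (k i * n) := by
      rw [pow_mul, ← hPk, ← axis_equation hP heq i rfl]
      exact (Finset.dvd_prod_of_mem _ (by simpa using hji)).mul_left _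
    obtain ⟨h, hh⟩ := eq_axisFactor_pow_of_dvd (hk i)
      (by rw [eval_zero_axisRestrict, coeff_zero_pderiv, hcoeff1]) hdvd
    exact ⟨h, fun _ => hh⟩
  choose H hH using hph
  -- The mixed derivative `∂_i ∂_j P (0)`, read off on the `i`-th axis.
  have hmixed : ∀ i j, i ≠ j → (H i j : ℝ) * (k i : ℝ)⁻¹ =
      MvPolynomial.coeff (Finsupp.single i 1 + Finsupp.single j 1) P := by
    intro i j hij
    rw [← eval_derivative_axisFactor_pow, ← hH i j hij.symm, derivative_axisRestrict,
      eval_zero_axisRestrict, coeff_zero_pderiv, MvPolynomial.coeff_pderiv]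
    simp [hij]
  refine ⟨k, H, hk, ?_, ?_, ?_, ?_⟩
  · intro i t
    rw [← eval_axisRestrict, hPk, Polynomial.eval_pow, eval_axisFactor]
  · intro i j hji t
    rw [← eval_axisRestrict, hH i j hji, Polynomial.eval_pow, eval_axisFactor]
  · intro i
    have h1 := axis_equation hP heq i (hPk i)
    rw [Finset.prod_congr rfl fun α hα => hH i α (Finset.ne_of_mem_erase hα),
      Finset.prod_pow_eq_pow_sum] at h1
    have h2 := axisFactor_sq_mul (hk i) rfl
    have h3 : axisFactor (k i) ^ (k i * 2 + ∑ α ∈ Finset.univ.erase i, H i α)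
        = axisFactor (k i) ^ (2 + k i * n) := by
      rw [pow_add, pow_add, pow_mul, pow_mul, ← h1, ← h2]; ring
    have h4 := congrArg Polynomial.natDegree h3
    rw [Polynomial.natDegree_pow, Polynomial.natDegree_pow, natDegree_axisFactor (hk i)] at h4
    obtain ⟨l, rfl⟩ : ∃ l, n = l + 2 := ⟨n - 2, by omega⟩
    rw [Nat.add_sub_cancel]
    rw [mul_add] at h4
    omega
  · intro i j hij
    have h1 := (hmixed i j hij).trans ((congrArg (MvPolynomial.coeff · P) (add_comm _ _)).trans
      (hmixed j i hij.symm).symm)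
    have hi : (k i : ℝ) ≠ 0 := by exact_mod_cast (hk i).ne'
    have hj : (k j : ℝ) ≠ 0 := by exact_mod_cast (hk j).ne'
    field_simp at h1
    rw [mul_comm (k i : ℝ)] at h1
    exact_mod_cast h1
end

section
/- The only functions u : ℝ² → ℝ of type (★) satisfying det D²u = e^{−u} on ℝ² are u(x₁,x₂) = 3·log(1 + (e^{x₁} + e^{x₂})/3) − x₁ − x₂ and u(x₁,x₂) = 2·log(1 + e^{x₁}/2) + 2·log(1 + e^{x₂}/2) − x₁ − x₂. -/
/-! With `X = e^{x₁}` and `Y = e^{x₂}`, a function of type (★) is `u = log P - x₁ - x₂` for a polynomial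
`P ∈ ℝ[X][Y]` with `P = 1 + X + Y + …`, and `∂/∂x₁`, `∂/∂x₂` become the Euler derivations
`X ∂/∂X`, `Y ∂/∂Y`. After multiplication by `P³`, the equation `det D²u = e^{-u}` is a polynomial
identity (`IsMA`, `isMA_toPoly_iff`), which is studied order by order in `Y`. Write
`P = p + q Y + r Y² + …` with `p, q, r ∈ ℝ[X]` and `θ = X d/dX`.

* Order `Y`: `q (p θ²p - (θp)²) = X p²`, that is, `(X p' / p)' = 1 / q`. The poles of `p' / p` are
  simple, and a Wronskian argument shows that `p' / p = 1 / (1 + γX)` and `q = (1 + γX)²` for some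
  constant `γ` (`edge_classification`). This uses that `q` is a polynomial.
* Order `Y²`: the equation is linear in `r` and gives `2 r p = (1 - γ) (1 + γX)⁴`. On the other hand,
  the same analysis along `X = 0` (`IsMA.swap`) gives `∂P/∂X (0, Y) = (1 + γY)²`, with the same `γ`
  since `2γ` is the coefficient of `XY`. Comparing the two values of the coefficient of `XY²` gives
  `(2γ - 1) (3γ - 1) = 0` (`IsMA.classification`).
* For each of the two values of `γ`, the polynomial `p` is determined by `(1 + γX) p' = p` and
  `p(0) = 1`, and `P` is determined by `p`: the coefficient of `Y^m` enters the equation at order `Y^m`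
  linearly, with the nonzero factor `m² (p θ²p - (θp)²)` (`IsMA.eq_of_coeff_zero_eq`).

Hence `P` is `(1 + X / 2)² (1 + Y / 2)²` for `γ = 1 / 2` and `(1 + (X + Y) / 3)³` for `γ = 1 / 3`;
that both are solutions is a direct computation.
-/

open Real Filter MeasureTheory

/-- The partial derivative of `u : ℝⁿ → ℝ` in the `i`-th coordinate direction. -/
noncomputable def pderivAt {n : ℕ} (u : (Fin n → ℝ) → ℝ) (i : Fin n) (x : Fin n → ℝ) : ℝ :=
  fderiv ℝ u x (Pi.single i 1)

/-- The gradient map `Du : ℝⁿ → ℝⁿ` of `u`. -/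
noncomputable def gradMap {n : ℕ} (u : (Fin n → ℝ) → ℝ) (x : Fin n → ℝ) : Fin n → ℝ :=
  fun i => pderivAt u i x

/-- The Hessian matrix `D²u` of `u` at `x`. -/
noncomputable def hessMat {n : ℕ} (u : (Fin n → ℝ) → ℝ) (x : Fin n → ℝ) :
    Matrix (Fin n) (Fin n) ℝ :=
  Matrix.of fun i j => pderivAt (pderivAt u j) i x

/-- `u` is of type (★) with index set `𝓘` and coefficients `a`:
`u x = log (∑_{I ∈ 𝓘} a_I e^{I·x}) − ∑ i, x i`, where `𝓘 ⊂ ℕⁿ` is finite, contains every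
multi-index of length `≤ 1`, `a_I > 0` on `𝓘`, and `a_I = 1` whenever `|I| ≤ 1`. -/
def IsTypeStar {n : ℕ} (u : (Fin n → ℝ) → ℝ) (𝓘 : Finset (Fin n → ℕ))
    (a : (Fin n → ℕ) → ℝ) : Prop :=
  (∀ I : Fin n → ℕ, (∑ i, I i) ≤ 1 → I ∈ 𝓘) ∧
  (∀ I ∈ 𝓘, 0 < a I) ∧
  (∀ I : Fin n → ℕ, (∑ i, I i) ≤ 1 → a I = 1) ∧
  ∀ x, u x = Real.log (∑ I ∈ 𝓘, a I * Real.exp (∑ i, (I i : ℝ) * x i)) - ∑ i, x i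

/-- `u` satisfies the Monge–Ampère equation `det D²u = e^{−u}` on all of `ℝⁿ`. -/
def SatisfiesMA {n : ℕ} (u : (Fin n → ℝ) → ℝ) : Prop :=
  ∀ x, (hessMat u x).det = Real.exp (-(u x))

/-! ### Exponential sums and the Hessian of their logarithm -/

/-- The exponential sum `∑ I ∈ 𝓘, a I * e^{I·x}`. -/
noncomputable def expSum {n : ℕ} (𝓘 : Finset (Fin n → ℕ)) (a : (Fin n → ℕ) → ℝ)
    (x : Fin n → ℝ) : ℝ :=
  ∑ I ∈ 𝓘, a I * Real.exp (∑ i, (I i : ℝ) * x i)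

lemma hasFDerivAt_expSum {n : ℕ} (𝓘 : Finset (Fin n → ℕ)) (a : (Fin n → ℕ) → ℝ)
    (x : Fin n → ℝ) :
    HasFDerivAt (expSum 𝓘 a)
      (∑ I ∈ 𝓘, a I • (Real.exp (∑ i, (I i : ℝ) * x i) •
        ∑ i, (I i : ℝ) • (ContinuousLinearMap.proj i : (Fin n → ℝ) →L[ℝ] ℝ))) x := by
  unfold expSum
  refine HasFDerivAt.fun_sum fun I _ => ?_
  refine HasFDerivAt.const_mul ?_ _
  refine HasFDerivAt.exp ?_
  refine HasFDerivAt.fun_sum fun i _ => ?_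
  exact HasFDerivAt.const_mul (hasFDerivAt_apply i x) _

lemma differentiable_expSum {n : ℕ} (𝓘 : Finset (Fin n → ℕ)) (a : (Fin n → ℕ) → ℝ) :
    Differentiable ℝ (expSum 𝓘 a) :=
  fun x => (hasFDerivAt_expSum 𝓘 a x).differentiableAt

/-- Exponential sums are closed under partial derivatives: `∂ᵢ` multiplies `a I` by `I i`. The
equality is one of functions, so that it can be iterated. -/
lemma pderivAt_expSum {n : ℕ} (𝓘 : Finset (Fin n → ℕ)) (a : (Fin n → ℕ) → ℝ) (i : Fin n) :
    pderivAt (expSum 𝓘 a) i = expSum 𝓘 (fun I => I i * a I) := by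
  funext x
  rw [pderivAt, (hasFDerivAt_expSum 𝓘 a x).fderiv, expSum]
  simp only [_root_.sum_apply, _root_.smul_apply,
    ContinuousLinearMap.proj_apply, smul_eq_mul, Pi.single_apply, mul_ite, mul_one, mul_zero,
    Finset.sum_ite_eq', Finset.mem_univ, if_true]
  exact Finset.sum_congr rfl fun I _ => by ring

lemma pderivAt_log_sub {n : ℕ} {F : (Fin n → ℝ) → ℝ} (hF : Differentiable ℝ F)
    (hpos : ∀ x, 0 < F x) (j : Fin n) :
    pderivAt (fun x => Real.log (F x) - ∑ i, x i) j = fun x => pderivAt F j x / F x - 1 := by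
  funext x
  have h1 : HasFDerivAt (fun x : Fin n → ℝ => ∑ i, x i)
      (∑ i, (ContinuousLinearMap.proj i : (Fin n → ℝ) →L[ℝ] ℝ)) x :=
    HasFDerivAt.fun_sum fun i _ => hasFDerivAt_apply i x
  have h2 := ((hF x).hasFDerivAt.log (hpos x).ne').sub h1
  rw [pderivAt]
  erw [h2.fderiv]
  simp [pderivAt, Pi.single_apply]
  ring

lemma pderivAt_div_sub_one {n : ℕ} {F G : (Fin n → ℝ) → ℝ} (hF : Differentiable ℝ F)
    (hG : Differentiable ℝ G) (hpos : ∀ x, 0 < F x) (i : Fin n) (x : Fin n → ℝ) :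
    pderivAt (fun x => G x / F x - 1) i x =
      (pderivAt G i x * F x - G x * pderivAt F i x) / F x ^ 2 := by
  have h2 := ((hG x).hasFDerivAt.mul
    ((hasDerivAt_inv (hpos x).ne').comp_hasFDerivAt x (hF x).hasFDerivAt)).sub_const 1
  have hx := (hpos x).ne'
  simp only [div_eq_mul_inv]
  rw [pderivAt]
  erw [h2.fderiv]
  simp [pderivAt]
  field_simp
  ring

/-- `F³ · det D²(log F)`, in terms of `F` and its first and second derivatives along two commuting
derivations. It is stated over an arbitrary commutative ring because it is applied both to values of
functions and to polynomials. -/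
def bordered {R : Type*} [CommRing R] (P P1 P2 P11 P12 P22 : R) : R :=
  P * (P11 * P22 - P12 ^ 2) - P11 * P2 ^ 2 - P22 * P1 ^ 2 + 2 * P12 * P1 * P2

/-- Since `e^{-u} = e^{x₁ + x₂} / F`, multiplying the Monge–Ampère equation for
`u = log F - x₁ - x₂` by `F³` removes the logarithm. -/
lemma satisfiesMA_iff {u : (Fin 2 → ℝ) → ℝ} {𝓘 : Finset (Fin 2 → ℕ)} {a : (Fin 2 → ℕ) → ℝ}
    (hpos : ∀ x, 0 < expSum 𝓘 a x)
    (hu : ∀ x, u x = Real.log (expSum 𝓘 a x) - ∑ i, x i) :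
    SatisfiesMA u ↔ ∀ x,
      bordered (expSum 𝓘 a x) (expSum 𝓘 (fun I => I 0 * a I) x) (expSum 𝓘 (fun I => I 1 * a I) x)
        (expSum 𝓘 (fun I => I 0 * (I 0 * a I)) x) (expSum 𝓘 (fun I => I 0 * (I 1 * a I)) x)
        (expSum 𝓘 (fun I => I 1 * (I 1 * a I)) x) =
      Real.exp (x 0) * Real.exp (x 1) * expSum 𝓘 a x ^ 2 := by
  obtain rfl : u = fun x => Real.log (expSum 𝓘 a x) - ∑ i, x i := funext hu
  refine forall_congr' fun x => ?_
  have hP := hpos x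
  have key : ∀ i j, hessMat (fun x => Real.log (expSum 𝓘 a x) - ∑ i, x i) x i j =
      (expSum 𝓘 (fun I => I i * (I j * a I)) x * expSum 𝓘 a x -
        expSum 𝓘 (fun I => I j * a I) x * expSum 𝓘 (fun I => I i * a I) x) /
          expSum 𝓘 a x ^ 2 := by
    intro i j
    simp only [hessMat, Matrix.of_apply]
    rw [pderivAt_log_sub (differentiable_expSum 𝓘 a) hpos, pderivAt_expSum,
      pderivAt_div_sub_one (differentiable_expSum 𝓘 a) (differentiable_expSum 𝓘 _) hpos,
      pderivAt_expSum, pderivAt_expSum]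
  have hsym : expSum 𝓘 (fun I => (I 1 : ℝ) * (I 0 * a I)) x =
      expSum 𝓘 (fun I => (I 0 : ℝ) * (I 1 * a I)) x := by
    congr 1; funext I; ring
  rw [Matrix.det_fin_two, key, key, key, key, hsym]
  have hexp : Real.exp (-(Real.log (expSum 𝓘 a x) - ∑ i, x i)) =
      Real.exp (x 0) * Real.exp (x 1) / expSum 𝓘 a x := by
    rw [neg_sub, Real.exp_sub, Real.exp_log hP, Fin.sum_univ_two, Real.exp_add]
  rw [hexp, bordered]
  set P := expSum 𝓘 a x
  have hP0 : P ≠ 0 := hP.ne'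
  generalize expSum 𝓘 (fun I => (I 0 : ℝ) * (I 1 * a I)) x = P12
  generalize expSum 𝓘 (fun I => (I 0 : ℝ) * (I 0 * a I)) x = P11
  generalize expSum 𝓘 (fun I => (I 1 : ℝ) * (I 1 * a I)) x = P22
  generalize expSum 𝓘 (fun I => (I 0 : ℝ) * a I) x = P1
  generalize expSum 𝓘 (fun I => (I 1 : ℝ) * a I) x = P2
  field_simp
  constructor <;> intro h
  · apply mul_left_cancel₀ hP0
    linear_combination h
  · linear_combination P * h

lemma expSum_pos {n : ℕ} {u : (Fin n → ℝ) → ℝ} {𝓘 : Finset (Fin n → ℕ)} {a : (Fin n → ℕ) → ℝ}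
    (h : IsTypeStar u 𝓘 a) (x : Fin n → ℝ) : 0 < expSum 𝓘 a x :=
  Finset.sum_pos (fun I hI => mul_pos (h.2.1 I hI) (Real.exp_pos _)) ⟨0, h.1 0 (by simp)⟩

/-! ### The Monge–Ampère equation as an identity in `ℝ[X][Y]` -/

open Polynomial

/-- The Euler derivation `X ∂/∂X` of `ℝ[X][Y]`, where `X` is the inner variable. It corresponds to
`∂/∂x₁` under `X = e^{x₁}`, `Y = e^{x₂}`. -/
noncomputable def eulerX : Derivation ℝ ℝ[X][X] ℝ[X][X] :=
  (C X : ℝ[X][X]) • (PolynomialModule.equivPolynomialSelf (R := ℝ[X])).toLinearMap.compDer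
    (derivative' (R := ℝ)).mapCoeffs

/-- The Euler derivation `Y ∂/∂Y` of `ℝ[X][Y]`, where `Y` is the outer variable. It corresponds to
`∂/∂x₂` under `X = e^{x₁}`, `Y = e^{x₂}`. -/
noncomputable def eulerY : Derivation ℝ[X] ℝ[X][X] ℝ[X][X] :=
  (X : ℝ[X][X]) • derivative'

lemma coeff_eulerX (P : ℝ[X][X]) (n : ℕ) :
    (eulerX P).coeff n = X * derivative (P.coeff n) := by
  simp [eulerX]
  rfl

lemma coeff_eulerY (P : ℝ[X][X]) (n : ℕ) :
    (eulerY P).coeff n = n * P.coeff n := by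
  simp [eulerY]
  cases n <;> simp [coeff_X_mul, coeff_derivative, mul_comm]

@[simp] lemma eulerX_C (p : ℝ[X]) : eulerX (C p) = C (X * derivative p) := by
  ext1 n
  rw [coeff_eulerX, coeff_C, coeff_C]; split_ifs <;> simp

@[simp] lemma eulerX_X : eulerX (X : ℝ[X][X]) = 0 := by
  ext1 n
  rw [coeff_eulerX, coeff_X]; split_ifs <;> simp

@[simp] lemma eulerY_C (p : ℝ[X]) : eulerY (C p) = 0 := by
  simp [eulerY]

@[simp] lemma eulerY_X : eulerY (X : ℝ[X][X]) = X := by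
  simp [eulerY]

lemma eulerY_X_pow (m : ℕ) : eulerY ((X : ℝ[X][X]) ^ m) = (m : ℝ[X][X]) * X ^ m := by
  ext1 n
  rw [coeff_eulerY, ← C_eq_natCast (R := ℝ[X]) m, coeff_C_mul, coeff_X_pow]
  split_ifs with h <;> simp [h]

lemma eulerX_X_pow (m : ℕ) : eulerX ((X : ℝ[X][X]) ^ m) = 0 := by
  ext1 n
  rw [coeff_eulerX, coeff_X_pow]; split_ifs <;> simp

/-- The Monge–Ampère equation for `u = log P - x₁ - x₂`, written as a polynomial identity in
`X = e^{x₁}` (inner variable) and `Y = e^{x₂}` (outer variable). -/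
def IsMA (P : ℝ[X][X]) : Prop :=
  bordered P (eulerX P) (eulerY P) (eulerX (eulerX P)) (eulerX (eulerY P)) (eulerY (eulerY P)) =
    C X * X * P ^ 2

lemma exists_eq_C_add_X_mul (P : ℝ[X][X]) : ∃ S, P = C (P.coeff 0) + X * S :=
  ⟨P.divX, by rw [add_comm, X_mul_divX_add]⟩

/-- The coefficients of `Y` and of `Y²` in the polynomial Monge–Ampère equation. Both sides vanish at
`Y = 0`; after one factor `Y` is cancelled, these are the value and the derivative at `Y = 0`. -/
lemma IsMA.levels {P : ℝ[X][X]} (h : IsMA P) {p q r : ℝ[X]} (hp : P.coeff 0 = p)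
    (hq : P.coeff 1 = q) (hr : P.coeff 2 = r) :
    q * (p * (X * derivative (X * derivative p)) - (X * derivative p) ^ 2) = X * p ^ 2 ∧
    4 * r * (p * (X * derivative (X * derivative p)) - (X * derivative p) ^ 2) +
      p * (q * (X * derivative (X * derivative q)) - (X * derivative q) ^ 2) = 2 * X * p * q := by
  obtain ⟨S, hS⟩ := exists_eq_C_add_X_mul P
  obtain ⟨T, hT⟩ := exists_eq_C_add_X_mul S
  obtain ⟨R, hR⟩ := exists_eq_C_add_X_mul T
  have hS0 : S.coeff 0 = q := by rw [← hq, hS]; simp [coeff_X_mul]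
  have hT0 : T.coeff 0 = r := by
    rw [← hr, hS, coeff_add, coeff_X_mul, hT, coeff_add, coeff_X_mul]; simp
  rw [hp] at hS
  rw [hS0] at hT
  rw [hT0] at hR
  have e1 : eulerX P = C (X * derivative p) + X * eulerX S := by simp [hS]
  have e11 : eulerX (eulerX P) =
      C (X * derivative (X * derivative p)) + X * eulerX (eulerX S) := by
    simp [e1, -map_mul]
  have e2 : eulerY P = X * (S + eulerY S) := by simp [hS]; ring
  have e12 : eulerX (eulerY P) = X * (eulerX S + eulerX (eulerY S)) := by simp [e2]
  have e22 : eulerY (eulerY P) = X * (S + 2 * eulerY S + eulerY (eulerY S)) := by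
    simp [e2]; ring
  have E : P * (eulerX (eulerX P) * (S + 2 * eulerY S + eulerY (eulerY S))
        - X * (eulerX S + eulerX (eulerY S)) ^ 2)
      - X * eulerX (eulerX P) * (S + eulerY S) ^ 2
      - (S + 2 * eulerY S + eulerY (eulerY S)) * eulerX P ^ 2
      + 2 * X * (eulerX S + eulerX (eulerY S)) * eulerX P * (S + eulerY S) = C X * P ^ 2 := by
    apply mul_left_cancel₀ (X_ne_zero (R := ℝ[X]))
    rw [IsMA, bordered, e12, e22, e2] at h
    linear_combination h
  have s1 : eulerX S = C (X * derivative q) + X * eulerX T := by simp [hT]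
  have s2 : eulerY S = X * (T + eulerY T) := by simp [hT]; ring
  have s12 : eulerX (eulerY S) = X * (eulerX T + eulerX (eulerY T)) := by simp [s2]
  have s11 : eulerX (eulerX S) =
      C (X * derivative (X * derivative q)) + X * eulerX (eulerX T) := by
    simp [s1, -map_mul]
  have s22 : eulerY (eulerY S) = X * (T + 2 * eulerY T + eulerY (eulerY T)) := by
    simp [s2]; ring
  have t2 : eulerY T = X * (R + eulerY R) := by simp [hR]; ring
  have t22 : eulerY (eulerY T) = X * (R + 2 * eulerY R + eulerY (eulerY R)) := by
    simp [t2]; ring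
  rw [e11, e1, s12, s11, s22, s1, s2, hS, hT, t22, t2, hR] at E
  constructor
  · have := congrArg (eval 0) E
    simp only [eval_add, eval_sub, eval_mul, eval_pow, eval_C, eval_X, eval_ofNat] at this
    linear_combination this
  · have := congrArg (fun Q => eval 0 (derivative Q)) E
    simp only [derivative_add, derivative_sub, derivative_mul, derivative_pow, derivative_C,
      derivative_X, derivative_ofNat, eval_add, eval_sub, eval_mul, eval_pow, eval_C, eval_X,
      eval_ofNat, eval_zero, eval_one] at this
    simp at this
    simp only [derivative_mul, derivative_X, one_mul]
    linear_combination this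

/-- The linearization in `t` of the Monge–Ampère equation at a solution `A`, modulo `Y`. All
derivatives of `A` along `Y ∂/∂Y` are divisible by `Y`, and so is `t`; the only term of the linear
part that survives modulo `Y` is the one containing the second `Y`-derivative of the perturbation. -/
lemma bordered_perturb {K : Type*} [CommRing K] {c Y t t' A A1 A11 B B1 B2 R R1 R2 R11 R12 R22 : K}
    (ht : t = Y * t')
    (hA : bordered A A1 (Y * B) A11 (Y * B1) (Y * B2) = c * Y * A ^ 2)
    (hP : bordered (A + t * R) (A1 + t * R1) (Y * B + t * R2) (A11 + t * R11) (Y * B1 + t * R12)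
      (Y * B2 + t * R22) = c * Y * (A + t * R) ^ 2) :
    ∃ Z, t * (R22 * (A * A11 - A1 ^ 2) + Y * Z) = 0 := by
  subst ht
  refine ⟨(R * (A11 + Y * t' * R11) * (B2 + t' * R22) + A * R11 * (B2 + t' * R22))
    - (R * Y * (B1 + t' * R12) ^ 2 + A * R12 * ((B1 + t' * R12) + B1))
    - (R11 * Y * (B + t' * R2) ^ 2 + A11 * R2 * ((B + t' * R2) + B))
    - (B2 + t' * R22) * R1 * (A1 + Y * t' * R1 + A1)
    + 2 * (R12 * (A1 + Y * t' * R1) * (B + t' * R2) + B1 * R1 * Y * (B + t' * R2) + B1 * A1 * R2)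
    - c * (2 * A * R + Y * t' * R ^ 2), ?_⟩
  unfold bordered at hA hP
  linear_combination hP - hA

/-- A solution is determined by its restriction to `Y = 0`. If `P - Q = Y^k R` with `k ≥ 1`, the
linearized equation at `Y = 0` reads `k² R(X, 0) (p θ²p - (θp)²) = 0` with `θ = X d/dX` and
`p = Q(X, 0)`, and the last factor is nonzero by the equation for `Q`. Hence `P - Q` is divisible by
every power of `Y`. -/
lemma IsMA.eq_of_coeff_zero_eq {P Q : ℝ[X][X]} (hP : IsMA P) (hQ : IsMA Q)
    (h0 : P.coeff 0 = Q.coeff 0) (hne : Q.coeff 0 ≠ 0) : P = Q := by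
  set p := Q.coeff 0 with hp
  have hD : p * (X * derivative (X * derivative p)) - (X * derivative p) ^ 2 ≠ 0 := by
    intro h
    have := (hQ.levels hp.symm rfl rfl).1
    rw [h, mul_zero] at this
    exact mul_ne_zero X_ne_zero (pow_ne_zero 2 hne) this.symm
  obtain ⟨S, hS⟩ := exists_eq_C_add_X_mul Q
  rw [← hp] at hS
  have e1 : eulerX Q = C (X * derivative p) + X * eulerX S := by simp [hS]
  have e11 : eulerX (eulerX Q) =
      C (X * derivative (X * derivative p)) + X * eulerX (eulerX S) := by
    simp [e1, -map_mul]
  have e2 : eulerY Q = X * (S + eulerY S) := by simp [hS]; ring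
  have e12 : eulerX (eulerY Q) = X * (eulerX S + eulerX (eulerY S)) := by simp [e2]
  have e22 : eulerY (eulerY Q) = X * (S + 2 * eulerY S + eulerY (eulerY S)) := by
    simp [e2]; ring
  have key : ∀ m : ℕ, (X : ℝ[X][X]) ^ (m + 1) ∣ P - Q := by
    intro m
    induction m with
    | zero => rw [zero_add, pow_one, X_dvd_iff, coeff_sub, h0, sub_self]
    | succ m ih =>
      obtain ⟨R, hR⟩ := ih
      have hPR : P = Q + X ^ (m + 1) * R := by linear_combination hR
      set t : ℝ[X][X] := X ^ (m + 1) with ht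
      have d1 : eulerX P = eulerX Q + t * eulerX R := by
        rw [hPR]; simp [ht]
      have d11 : eulerX (eulerX P) = eulerX (eulerX Q) + t * eulerX (eulerX R) := by
        rw [d1]; simp [ht]
      -- the factor `k` from differentiating `Y ^ k` makes the linearized equation nondegenerate
      have ht2 : eulerY t = ((m + 1 : ℕ) : ℝ[X][X]) * t := eulerY_X_pow (m + 1)
      set k : ℝ[X][X] := ((m + 1 : ℕ) : ℝ[X][X]) with hk
      have hk1 : eulerX k = 0 := by rw [hk, ← C_eq_natCast]; simp
      have hk2 : eulerY k = 0 := by rw [hk, ← C_eq_natCast]; simp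
      have d2 : eulerY P = eulerY Q + t * (k * R + eulerY R) := by
        rw [hPR]; simp [ht2]; ring
      have d12 : eulerX (eulerY P) =
          eulerX (eulerY Q) + t * (k * eulerX R + eulerX (eulerY R)) := by
        rw [d2]; simp [hk1, ht]
      have d22 : eulerY (eulerY P) =
          eulerY (eulerY Q) + t * (k ^ 2 * R + 2 * k * eulerY R + eulerY (eulerY R)) := by
        rw [d2]; simp [hk2, ht2]; ring
      rw [IsMA, d22, d12, d2, d11, d1, hPR, e12, e22, e2] at hP
      have hQ' := hQ
      rw [IsMA, e12, e22, e2] at hQ'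
      obtain ⟨Z, hZ⟩ := bordered_perturb (t' := X ^ m) (by rw [ht, pow_succ']) hQ' hP
      have ht0 : t ≠ 0 := pow_ne_zero _ X_ne_zero
      replace hZ := (mul_eq_zero.mp hZ).resolve_left ht0
      obtain ⟨T, hT⟩ := exists_eq_C_add_X_mul R
      have r2 : eulerY R = X * (T + eulerY T) := by
        conv_lhs => rw [hT]
        simp only [map_add, Derivation.leibniz, eulerY_C, eulerY_X, smul_eq_mul, zero_add]
        ring
      have r22 : eulerY (eulerY R) = X * (T + 2 * eulerY T + eulerY (eulerY T)) := by
        rw [r2]; simp; ring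
      have hZ0 := congrArg (eval 0) hZ
      rw [r22, r2, e11, e1, hk] at hZ0
      have hR0 : eval 0 R = R.coeff 0 := (coeff_zero_eq_eval_zero R).symm
      have hQ0 : eval 0 Q = p := (coeff_zero_eq_eval_zero Q).symm
      simp only [eval_add, eval_sub, eval_mul, eval_pow, eval_C, eval_X, eval_ofNat, eval_natCast,
        hR0, hQ0, zero_mul, mul_zero, add_zero, eval_zero] at hZ0
      have hR00 : R.coeff 0 = 0 := by
        have h2 := (mul_eq_zero.mp hZ0).resolve_right hD
        refine (mul_eq_zero.mp h2).resolve_left (pow_ne_zero 2 ?_)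
        exact_mod_cast Nat.succ_ne_zero m
      rw [hR, pow_succ]
      exact mul_dvd_mul_left _ (X_dvd_iff.mpr hR00)
  by_contra hPQ
  have hsub : P - Q ≠ 0 := sub_ne_zero.mpr hPQ
  have := natDegree_le_of_dvd (key (P - Q).natDegree) hsub
  rw [natDegree_X_pow] at this
  omega

/-! ### The restriction to the edge `Y = 0` -/

/-- `(1 + γX) p' = p` determines every coefficient of `p` recursively from `p(0)`. -/
lemma ode_unique {γ : ℝ} {p p' : ℝ[X]} (h : (1 + C γ * X) * derivative p = p)
    (h' : (1 + C γ * X) * derivative p' = p') (h0 : p.coeff 0 = p'.coeff 0) : p = p' := by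
  have step : ∀ (f : ℝ[X]), (1 + C γ * X) * derivative f = f → ∀ n : ℕ,
      f.coeff (n + 1) = (1 - γ * n) * f.coeff n / (n + 1) := by
    intro f hf n
    have hn : (n : ℝ) + 1 ≠ 0 := by positivity
    have := congrArg (fun g => coeff g n) hf
    simp only [add_mul, one_mul, mul_assoc, coeff_add, coeff_C_mul, coeff_derivative] at this
    rw [eq_div_iff hn]
    cases n with
    | zero => simp at this ⊢; linear_combination this
    | succ n =>
      rw [coeff_X_mul, coeff_derivative] at this
      push_cast at this ⊢
      linear_combination this
  ext n
  induction n with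
  | zero => exact h0
  | succ n ih => rw [step p h, step p' h', ih]

lemma derivative_derivative_eq_zero_of_dvd {b : ℝ[X]} (h : b ∣ derivative (derivative b)) :
    derivative (derivative b) = 0 := by
  by_contra hne
  have h1 := natDegree_le_of_dvd h hne
  have hb : b.natDegree ≠ 0 := by
    intro h0
    rw [natDegree_eq_zero] at h0
    obtain ⟨c, rfl⟩ := h0
    simp at hne
  have h2 := natDegree_derivative_lt hb
  have h3 := natDegree_derivative_le (derivative b)
  omega

/-- If `p' / p = a / b` in lowest terms, where `p = g * b` and `p' = g * a`, then `b` and `b'` have no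
common irreducible factor, that is, the poles of a logarithmic derivative are simple. A common factor
`ϖ` satisfies `ϖ² ∣ b`, and then `g (a - b') = g' b` shows inductively that every power of `ϖ`
divides `g`. -/
lemma not_dvd_derivative_of_coprime {a b g ϖ : ℝ[X]} (hg : g ≠ 0) (hϖ : Irreducible ϖ)
    (hab : IsCoprime a b) (h : derivative (g * b) = g * a) (hb : ϖ ∣ b)
    (hb' : ϖ ∣ derivative b) : False := by
  have hϖp : Prime ϖ := hϖ.prime
  have hna : ¬ ϖ ∣ a - derivative b := fun h1 =>
    hϖ.not_isUnit (hab.isUnit_of_dvd' (by simpa using dvd_add h1 hb') hb)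
  have hsq : ϖ ^ 2 ∣ b := by
    obtain ⟨c, rfl⟩ := hb
    rw [derivative_mul] at hb'
    have h1 : ϖ ∣ derivative ϖ * c := (dvd_add_left (dvd_mul_right ϖ _)).mp hb'
    have h2 : ¬ ϖ ∣ derivative ϖ := fun h2 =>
      hϖ.not_isUnit ((separable_def _ |>.mp hϖ.separable).isUnit_of_dvd' dvd_rfl h2)
    rw [pow_two]
    exact mul_dvd_mul_left _ ((hϖp.dvd_or_dvd h1).resolve_left h2)
  have key : ∀ n : ℕ, ϖ ^ n ∣ g := by
    intro n
    induction n with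
    | zero => simp
    | succ n ih =>
      have h1 : ϖ ^ (n - 1) ∣ derivative g := pow_sub_one_dvd_derivative_of_pow_dvd ih
      have h2 : ϖ ^ (n + 1) ∣ g * (a - derivative b) := by
        have h3 : g * (a - derivative b) = derivative g * b := by
          rw [derivative_mul] at h; linear_combination -h
        rw [h3]
        refine (pow_dvd_pow ϖ (by omega : n + 1 ≤ (n - 1) + 2)).trans ?_
        rw [pow_add]
        exact mul_dvd_mul h1 hsq
      exact hϖp.pow_dvd_of_dvd_mul_right _ hna h2
  have h1 := natDegree_le_of_dvd (key (g.natDegree + 1)) hg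
  rw [natDegree_pow] at h1
  have h2 := hϖ.natDegree_pos
  nlinarith

/-- The equation along `Y = 0` says `(X p' / p)' = 1 / q`. Writing `p' / p = a / b` in lowest terms,
the Wronskian `W = (Xa)' b - (Xa) b'` divides `b²` and is coprime to `b`, so it is constant.
Then `W' = 0` gives `(Xa)'' b = (Xa) b''`, so `b` divides `b''`; therefore `b'' = 0` and
`(Xa)'' = 0`. -/
lemma edge_classification {p q : ℝ[X]} (hp0 : p.coeff 0 = 1) (hp1 : p.coeff 1 = 1)
    (h : q * (p * (X * derivative (X * derivative p)) - (X * derivative p) ^ 2) = X * p ^ 2) :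
    ∃ γ : ℝ, (1 + C γ * X) * derivative p = p ∧ q = (1 + C γ * X) ^ 2 := by
  have hpne : p ≠ 0 := by rintro rfl; simp at hp0
  set g := EuclideanDomain.gcd p (derivative p) with hgdef
  have hg : g ≠ 0 := fun h0 => hpne (EuclideanDomain.gcd_eq_zero_iff.mp h0).1
  obtain ⟨b, hb⟩ : g ∣ p := EuclideanDomain.gcd_dvd_left _ _
  obtain ⟨a, ha⟩ : g ∣ derivative p := EuclideanDomain.gcd_dvd_right _ _
  have hab : IsCoprime a b := by
    have := EuclideanDomain.gcd_eq_gcd_ab p (derivative p)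
    rw [← hgdef] at this
    refine ⟨EuclideanDomain.gcdB p (derivative p), EuclideanDomain.gcdA p (derivative p), ?_⟩
    apply mul_left_cancel₀ hg
    conv_rhs => rw [mul_one, this]
    linear_combination -EuclideanDomain.gcdA p (derivative p) * hb
      - EuclideanDomain.gcdB p (derivative p) * ha
  have hgb0 : g.coeff 0 * b.coeff 0 = 1 := by rw [← mul_coeff_zero, ← hb, hp0]
  have hb0 : b.coeff 0 ≠ 0 := fun h0 => by simp [h0] at hgb0
  have hg0 : g.coeff 0 ≠ 0 := fun h0 => by simp [h0] at hgb0
  -- clearing denominators in `(X a / b)' = 1 / q`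
  have hW : q * (derivative (X * a) * b - X * a * derivative b) = b ^ 2 := by
    have hdp : derivative (X * derivative p) = derivative (X * a) * g + X * a * derivative g := by
      rw [ha, ← derivative_mul]; congr 1; ring
    have hdb : derivative g * b + g * derivative b = g * a := by
      rw [← derivative_mul, ← hb, ha]
    apply mul_left_cancel₀ (mul_ne_zero (X_ne_zero (R := ℝ)) (pow_ne_zero 2 hg))
    rw [hdp, ha] at h
    have hb' : X * p ^ 2 = X * g ^ 2 * b ^ 2 := by rw [hb]; ring
    rw [hb'] at h
    rw [← h, hb]
    linear_combination (-q * X * g * X * a) * hdb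
  set W := derivative (X * a) * b - X * a * derivative b with hWdef
  have hcop : IsCoprime W b := by
    refine isCoprime_of_irreducible_dvd (fun h0 => hb0 (by simp [h0.2])) fun ϖ hϖ hϖW hϖb => ?_
    have hϖp : Prime ϖ := hϖ.prime
    have h1 : ϖ ∣ X * a * derivative b := by
      have := dvd_sub (dvd_mul_of_dvd_right hϖb (derivative (X * a))) hϖW
      rwa [hWdef, sub_sub_cancel] at this
    rcases hϖp.dvd_or_dvd h1 with h2 | h2
    · rcases hϖp.dvd_or_dvd h2 with h3 | h3
      · have h4 : X ∣ b := ((hϖ.dvd_symm irreducible_X h3).trans hϖb)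
        exact hb0 (X_dvd_iff.mp h4)
      · exact hϖ.not_isUnit (hab.isUnit_of_dvd' h3 hϖb)
    · exact not_dvd_derivative_of_coprime hg hϖ hab (by rw [← hb, ha]) hϖb h2
  have hWu : IsUnit W := hcop.pow_right.isUnit_of_dvd (Dvd.intro_left q hW)
  obtain ⟨w, hw, hwW⟩ := isUnit_iff.mp hWu
  have hW' : derivative (derivative (X * a)) * b = X * a * derivative (derivative b) := by
    have h1 : derivative W = 0 := by rw [← hwW, derivative_C]
    rw [hWdef, derivative_sub, derivative_mul, derivative_mul (f := X * a)] at h1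
    linear_combination h1
  have hXa : IsCoprime b (X * a) := by
    refine IsCoprime.mul_right ?_ hab.symm
    exact ((irreducible_X.coprime_iff_not_dvd).mpr fun h => hb0 (X_dvd_iff.mp h)).symm
  have hb2 : derivative (derivative b) = 0 :=
    derivative_derivative_eq_zero_of_dvd (hXa.dvd_of_dvd_mul_left (Dvd.intro_left _ hW'))
  have hbne : b ≠ 0 := fun h0 => hb0 (by simp [h0])
  have ha2 : derivative (derivative (X * a)) = 0 := by
    rw [hb2, mul_zero] at hW'
    exact (mul_eq_zero.mp hW').resolve_right hbne
  have lin : ∀ f : ℝ[X], derivative (derivative f) = 0 → f = C (f.coeff 0) + C (f.coeff 1) * X := by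
    intro f hf
    ext n
    rcases n with _ | _ | n
    · simp
    · simp [coeff_C]
    · have := congrArg (fun g => coeff g n) hf
      simp [coeff_derivative] at this
      rcases this with (h | h) | h
      · simp [coeff_C_succ, h]
      · exact absurd h (by positivity)
      · exact absurd h (by positivity)
  have hblin := lin b hb2
  have halin := lin (X * a) ha2
  have haC : a = C (a.coeff 0) := by
    apply mul_left_cancel₀ (X_ne_zero (R := ℝ))
    rw [halin]; simp [coeff_X_mul]
  set α := a.coeff 0
  have hdp0 : (derivative p).coeff 0 = 1 := by simp [coeff_derivative, hp1]
  have hga0 : g.coeff 0 * α = 1 := by rw [← mul_coeff_zero, ← ha, hdp0]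
  have hαb : b.coeff 0 = α := mul_left_cancel₀ hg0 (hgb0.trans hga0.symm)
  rw [hαb] at hblin
  have hα : α ≠ 0 := hαb ▸ hb0
  set β := b.coeff 1
  have hbα : b = C α * (1 + C (β / α) * X) := by
    rw [hblin, mul_add, ← mul_assoc, ← C_mul, mul_div_cancel₀ _ hα, mul_one]
  have hCα : (C α : ℝ[X]) ≠ 0 := C_ne_zero.mpr hα
  refine ⟨β / α, ?_, ?_⟩
  · apply mul_left_cancel₀ hCα
    rw [← mul_assoc, ← hbα, ha, hb, haC]; ring
  · apply mul_left_cancel₀ (pow_ne_zero 2 hCα)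
    rw [← mul_pow, ← hbα, ← hW, hWdef, haC, hblin]
    simp
    ring

/-! ### From exponential sums to polynomials -/

/-- The polynomial `∑ I ∈ 𝓘, a I * X ^ (I 0) * Y ^ (I 1)` in `ℝ[X][Y]`, which becomes `expSum 𝓘 a`
under `X = e^{x₁}`, `Y = e^{x₂}`. -/
noncomputable def toPoly (𝓘 : Finset (Fin 2 → ℕ)) (a : (Fin 2 → ℕ) → ℝ) : ℝ[X][X] :=
  ∑ I ∈ 𝓘, monomial (I 1) (monomial (I 0) (a I))

lemma eulerX_toPoly (𝓘 : Finset (Fin 2 → ℕ)) (a : (Fin 2 → ℕ) → ℝ) :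
    eulerX (toPoly 𝓘 a) = toPoly 𝓘 (fun I => I 0 * a I) := by
  rw [toPoly, map_sum]
  refine Finset.sum_congr rfl fun I _ => ?_
  ext1 n
  rw [coeff_eulerX, coeff_monomial, coeff_monomial]
  split_ifs
  · ext m
    cases m with
    | zero =>
      rw [mul_coeff_zero, coeff_X_zero, zero_mul, coeff_monomial]
      split_ifs with h <;> simp [h]
    | succ m =>
      rw [coeff_X_mul, coeff_derivative, coeff_monomial, coeff_monomial]
      split_ifs with h <;> simp [h, mul_comm]
  · simp

lemma eulerY_toPoly (𝓘 : Finset (Fin 2 → ℕ)) (a : (Fin 2 → ℕ) → ℝ) :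
    eulerY (toPoly 𝓘 a) = toPoly 𝓘 (fun I => I 1 * a I) := by
  rw [toPoly, map_sum]
  refine Finset.sum_congr rfl fun I _ => ?_
  ext1 n
  rw [coeff_eulerY, coeff_monomial, coeff_monomial]
  split_ifs with h
  · rw [← h, ← C_eq_natCast, C_mul_monomial]
  · simp

lemma evalEval_toPoly (𝓘 : Finset (Fin 2 → ℕ)) (a : (Fin 2 → ℕ) → ℝ) (x : Fin 2 → ℝ) :
    evalEval (Real.exp (x 0)) (Real.exp (x 1)) (toPoly 𝓘 a) = expSum 𝓘 a x := by
  rw [toPoly, evalEval_finsetSum, expSum]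
  refine Finset.sum_congr rfl fun I _ => ?_
  simp [evalEval, eval_monomial, Fin.sum_univ_two, Real.exp_add, Real.exp_nat_mul]
  ring

lemma coeff_toPoly {𝓘 : Finset (Fin 2 → ℕ)} {a : (Fin 2 → ℕ) → ℝ} {i j : ℕ} :
    ((toPoly 𝓘 a).coeff j).coeff i = if ![i, j] ∈ 𝓘 then a ![i, j] else 0 := by
  rw [toPoly, finsetSum_coeff, finsetSum_coeff, ← Finset.sum_ite_eq' 𝓘 ![i, j] a]
  refine Finset.sum_congr rfl fun I _ => ?_
  have : I = ![i, j] ↔ I 1 = j ∧ I 0 = i := by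
    constructor
    · rintro rfl; simp
    · rintro ⟨rfl, rfl⟩; ext k; fin_cases k <;> rfl
  simp only [coeff_monomial, this]
  by_cases h : I 1 = j <;> simp [h, coeff_monomial]

/-- A polynomial vanishing on the open positive quadrant is zero. -/
lemma eq_zero_of_evalEval_exp {P : ℝ[X][X]}
    (h : ∀ x : Fin 2 → ℝ, evalEval (Real.exp (x 0)) (Real.exp (x 1)) P = 0) : P = 0 := by
  have hinf : (Set.Ioi (0 : ℝ)).Infinite := Set.Ioi_infinite 0
  have hy : ∀ y : ℝ, 0 < y → eval (C y) P = 0 := by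
    intro y hy
    refine eq_zero_of_infinite_isRoot _ (hinf.mono fun x hx => ?_)
    have := h ![Real.log x, Real.log y]
    simpa [Real.exp_log hy, Real.exp_log (show 0 < x from hx), evalEval] using this
  refine eq_zero_of_infinite_isRoot _ ((hinf.image (C_injective.injOn)).mono ?_)
  rintro _ ⟨y, hy0, rfl⟩
  exact hy y hy0

/-- The equation on `ℝ²` is equivalent to the polynomial one, because `(e^{x₁}, e^{x₂})` runs through
a Zariski-dense set. -/
lemma isMA_toPoly_iff {u : (Fin 2 → ℝ) → ℝ} {𝓘 : Finset (Fin 2 → ℕ)} {a : (Fin 2 → ℕ) → ℝ}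
    (h : IsTypeStar u 𝓘 a) : SatisfiesMA u ↔ IsMA (toPoly 𝓘 a) := by
  rw [satisfiesMA_iff (expSum_pos h) h.2.2.2]
  have key : ∀ x : Fin 2 → ℝ, evalEval (Real.exp (x 0)) (Real.exp (x 1))
      (bordered (toPoly 𝓘 a) (eulerX (toPoly 𝓘 a)) (eulerY (toPoly 𝓘 a))
        (eulerX (eulerX (toPoly 𝓘 a))) (eulerX (eulerY (toPoly 𝓘 a)))
        (eulerY (eulerY (toPoly 𝓘 a))) - C X * X * toPoly 𝓘 a ^ 2) =
      bordered (expSum 𝓘 a x) (expSum 𝓘 (fun I => I 0 * a I) x) (expSum 𝓘 (fun I => I 1 * a I) x)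
        (expSum 𝓘 (fun I => I 0 * (I 0 * a I)) x) (expSum 𝓘 (fun I => I 0 * (I 1 * a I)) x)
        (expSum 𝓘 (fun I => I 1 * (I 1 * a I)) x) -
      Real.exp (x 0) * Real.exp (x 1) * expSum 𝓘 a x ^ 2 := by
    intro x
    simp only [eulerX_toPoly, eulerY_toPoly, bordered, evalEval_sub, evalEval_add, evalEval_mul,
      evalEval_pow, evalEval_toPoly, evalEval_X, evalEval_C, eval_X]
    simp [evalEval]
  constructor
  · intro hx
    exact sub_eq_zero.mp (eq_zero_of_evalEval_exp fun x => by rw [key, hx, sub_self])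
  · intro hP x
    have := key x
    rw [IsMA] at hP
    rw [hP, sub_self, evalEval_zero] at this
    linear_combination -this

/-! ### The two solutions -/

/-- The polynomial `(1 + (X + Y) / 3)³`, corresponding to the Fubini–Study metric on `ℙ²`. -/
noncomputable def polyP2 : ℝ[X][X] := (1 + C (C (1 / 3)) * (C X + X)) ^ 3

/-- The polynomial `(1 + X / 2)² (1 + Y / 2)²`, corresponding to the product of Fubini–Study metrics
on `ℙ¹ × ℙ¹`. -/
noncomputable def polyP1P1 : ℝ[X][X] := (1 + C (C (1 / 2)) * C X) ^ 2 * (1 + C (C (1 / 2)) * X) ^ 2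

lemma isMA_polyP2 : IsMA polyP2 := by
  have h3 : (3 : ℝ[X][X]) * C (C (1 / 3)) = 1 := by
    rw [← C_ofNat, ← C_ofNat, ← C_mul, ← C_mul]; norm_num
  set c : ℝ[X][X] := C (C (1 / 3)) with hc
  have c1 : eulerX c = 0 := by simp [hc]
  have c2 : eulerY c = 0 := by simp [hc]
  have x1 : eulerX (C X : ℝ[X][X]) = C X := by simp
  set x : ℝ[X][X] := C X
  have x2 : eulerY x = 0 := by simp [x]
  set s : ℝ[X][X] := 1 + c * (x + X) with hs
  have s1 : eulerX s = c * x := by simp [hs, c1, x1]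
  have s2 : eulerY s = c * X := by simp [hs, c2, x2]
  have hP : polyP2 = s ^ 3 := rfl
  have e1 : eulerX polyP2 = x * s ^ 2 := by
    rw [hP]; simp [Derivation.leibniz_pow, s1]; linear_combination x * s ^ 2 * h3
  have e2 : eulerY polyP2 = X * s ^ 2 := by
    rw [hP]; simp [Derivation.leibniz_pow, s2]; linear_combination X * s ^ 2 * h3
  have e11 : eulerX (eulerX polyP2) = x * s ^ 2 + 2 * c * x ^ 2 * s := by
    rw [e1]; simp [Derivation.leibniz_pow, s1, x1]; ring
  have e12 : eulerX (eulerY polyP2) = 2 * c * x * X * s := by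
    rw [e2]; simp [Derivation.leibniz_pow, s1]; ring
  have e22 : eulerY (eulerY polyP2) = X * s ^ 2 + 2 * c * X ^ 2 * s := by
    rw [e2]; simp [Derivation.leibniz_pow, s2]; ring
  rw [IsMA, e11, e12, e22, e1, e2, hP, bordered]
  linear_combination x * X * s ^ 6 * hs + x * X * s ^ 6 * (x + X) * h3

lemma isMA_polyP1P1 : IsMA polyP1P1 := by
  have h3 : (2 : ℝ[X][X]) * C (C (1 / 2)) = 1 := by
    rw [← C_ofNat, ← C_ofNat, ← C_mul, ← C_mul]; norm_num
  set c : ℝ[X][X] := C (C (1 / 2)) with hc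
  have c1 : eulerX c = 0 := by simp [hc]
  have c2 : eulerY c = 0 := by simp [hc]
  have x1 : eulerX (C X : ℝ[X][X]) = C X := by simp
  set x : ℝ[X][X] := C X
  have x2 : eulerY x = 0 := by simp [x]
  set s : ℝ[X][X] := 1 + c * x with hs
  set t : ℝ[X][X] := 1 + c * X with ht
  have s1 : eulerX s = c * x := by simp [hs, c1, x1]
  have s2 : eulerY s = 0 := by simp [hs, c2, x2]
  have t1 : eulerX t = 0 := by simp [ht, c1]
  have t2 : eulerY t = c * X := by simp [ht, c2]
  have hP : polyP1P1 = s ^ 2 * t ^ 2 := rfl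
  have e1 : eulerX polyP1P1 = x * s * t ^ 2 := by
    rw [hP]; simp [Derivation.leibniz_pow, s1, t1]
    linear_combination x * s * t ^ 2 * h3
  have e2 : eulerY polyP1P1 = X * t * s ^ 2 := by
    rw [hP]; simp [Derivation.leibniz_pow, s2, t2]
    linear_combination X * t * s ^ 2 * h3
  have e11 : eulerX (eulerX polyP1P1) = (x * s + c * x ^ 2) * t ^ 2 := by
    rw [e1]; simp [Derivation.leibniz_pow, s1, t1, x1]; ring
  have e12 : eulerX (eulerY polyP1P1) = x * X * s * t := by
    rw [e2]; simp [Derivation.leibniz_pow, s1, t1]; linear_combination x * X * s * t * h3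
  have e22 : eulerY (eulerY polyP1P1) = (X * t + c * X ^ 2) * s ^ 2 := by
    rw [e2]; simp [Derivation.leibniz_pow, s2, t2]; ring
  rw [IsMA, e11, e12, e22, e1, e2, hP, bordered]
  linear_combination x * X * s ^ 4 * t ^ 4 * ((t + c * X - X) * (hs + x * h3) + ht + X * h3)

/-! ### Classification of the polynomial solutions -/

open Polynomial.Bivariate in
lemma coeff_coeff_swap (P : ℝ[X][X]) (i j : ℕ) :
    ((swap P).coeff j).coeff i = (P.coeff i).coeff j := by
  induction P using Polynomial.induction_on' with
  | add p q hp hq => simp only [map_add, coeff_add, hp, hq]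
  | monomial n f =>
    induction f using Polynomial.induction_on' with
    | add p q hp hq => simp only [map_add, coeff_add, hp, hq]
    | monomial m c =>
      rw [swap_monomial_monomial]
      by_cases h1 : n = i <;> by_cases h2 : m = j <;> simp [coeff_monomial, h1, h2]

lemma coeff_coeff_eulerX (P : ℝ[X][X]) (i j : ℕ) :
    ((eulerX P).coeff j).coeff i = i * (P.coeff j).coeff i := by
  rw [coeff_eulerX]
  cases i with
  | zero => simp
  | succ i => rw [coeff_X_mul, coeff_derivative]; push_cast; ring

lemma coeff_coeff_eulerY (P : ℝ[X][X]) (i j : ℕ) :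
    ((eulerY P).coeff j).coeff i = j * (P.coeff j).coeff i := by
  rw [coeff_eulerY, ← C_eq_natCast, coeff_C_mul]

open Polynomial.Bivariate in
lemma IsMA.swap {P : ℝ[X][X]} (h : IsMA P) : IsMA (swap P) := by
  have hX : ∀ Q : ℝ[X][X], eulerX (Bivariate.swap Q) = Bivariate.swap (eulerY Q) := fun Q => by
    ext j i
    rw [coeff_coeff_eulerX, coeff_coeff_swap, coeff_coeff_swap, coeff_coeff_eulerY]
  have hY : ∀ Q : ℝ[X][X], eulerY (Bivariate.swap Q) = Bivariate.swap (eulerX Q) := fun Q => by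
    ext j i
    rw [coeff_coeff_eulerY, coeff_coeff_swap, coeff_coeff_swap, coeff_coeff_eulerX]
  have hXY : eulerY (eulerX P) = eulerX (eulerY P) := by
    ext j i
    rw [coeff_coeff_eulerY, coeff_coeff_eulerX, coeff_coeff_eulerX, coeff_coeff_eulerY]
    ring
  rw [IsMA, hX, hY, hX, hX, hY, hXY]
  have hsw := congrArg Bivariate.swap h
  simp only [bordered, map_add, map_sub, map_mul, map_pow, map_ofNat, swap_X, swap_Y] at hsw ⊢
  linear_combination hsw

/-- The edges `Y = 0` and `X = 0` give `P(X, 0)` and `P(0, Y)` in terms of two constants `γ`, `γ'`,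
which agree since both are half the coefficient of `XY`. The coefficient of `XY²` is then computed
from the edge `X = 0` and from the `Y²`-level of the equation; equating the two values leaves
`γ = 1 / 2` or `γ = 1 / 3`. -/
lemma IsMA.classification {P : ℝ[X][X]} (h : IsMA P) (h00 : (P.coeff 0).coeff 0 = 1)
    (h10 : (P.coeff 0).coeff 1 = 1) (h01 : (P.coeff 1).coeff 0 = 1) :
    P = polyP2 ∨ P = polyP1P1 := by
  obtain ⟨l1, l2⟩ := h.levels rfl rfl rfl
  obtain ⟨γ, hp, hq⟩ := edge_classification h00 h10 l1
  obtain ⟨l1', -⟩ := h.swap.levels rfl rfl rfl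
  obtain ⟨γ', -, hq'⟩ := edge_classification (by rw [coeff_coeff_swap, h00])
    (by rw [coeff_coeff_swap, h01]) l1'
  have hs2 : ∀ δ : ℝ, ((1 + C δ * X : ℝ[X]) ^ 2).coeff 1 = 2 * δ ∧
      ((1 + C δ * X : ℝ[X]) ^ 2).coeff 2 = δ ^ 2 := by
    intro δ
    have : (1 + C δ * X : ℝ[X]) ^ 2 = C 1 + C (2 * δ) * X + C (δ ^ 2) * X ^ 2 := by
      simp only [C_mul, C_pow, C_1, C_ofNat]; ring
    rw [this]
    constructor <;>
    · simp only [coeff_add, coeff_C_mul, coeff_C, coeff_X, coeff_X_pow]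
      norm_num
  have hγ : γ' = γ := by
    have h1 := coeff_coeff_swap P 1 1
    rw [hq, hq', (hs2 γ).1, (hs2 γ').1] at h1
    linarith
  have hr1 : (P.coeff 2).coeff 1 = γ ^ 2 := by
    rw [← coeff_coeff_swap, hq', (hs2 γ').2, hγ]
  have hpne : P.coeff 0 ≠ 0 := by intro h0; simp [h0] at h00
  set p := P.coeff 0
  set r := P.coeff 2
  -- the `Y²`-level of the equation, combined with the `Y`-level, determines `r`
  have hr : 2 * r * p = C (1 - γ) * (1 + C γ * X) ^ 4 := by
    apply mul_left_cancel₀ (mul_ne_zero (X_ne_zero (R := ℝ)) hpne)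
    apply mul_left_cancel₀ (two_ne_zero (α := ℝ[X]))
    rw [hq] at l1 l2
    have hqd : (1 + C γ * X : ℝ[X]) ^ 2 * (X * derivative (X * derivative ((1 + C γ * X) ^ 2))) -
        (X * derivative ((1 + C γ * X) ^ 2)) ^ 2 = 2 * C γ * X * (1 + C γ * X) ^ 2 := by
      simp [derivative_pow, C_ofNat]; ring
    rw [hqd] at l2
    simp only [map_sub, C_1]
    linear_combination (1 + C γ * X) ^ 2 * l2 - 4 * r * l1
  -- the two lowest coefficients of `hr` express `r(0)` and `r'(0)` through `γ`
  have hr0 : 2 * r.coeff 0 = 1 - γ := by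
    have := congrArg (eval 0) hr
    simp only [eval_mul, eval_pow, eval_add, eval_C, eval_X, eval_one, eval_ofNat,
      ← coeff_zero_eq_eval_zero, h00] at this
    linear_combination this
  have hd : ∀ f : ℝ[X], eval 0 (derivative f) = f.coeff 1 := fun f => by
    rw [← coeff_zero_eq_eval_zero, coeff_derivative]; simp
  have hr2 : 2 * (r.coeff 1 + r.coeff 0) = (1 - γ) * (4 * γ) := by
    have := congrArg (fun f => eval 0 (derivative f)) hr
    simp only [derivative_mul, derivative_pow, derivative_add, derivative_C, derivative_X,
      derivative_one, derivative_ofNat, eval_mul, eval_pow, eval_add, eval_C, eval_X, eval_one,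
      eval_ofNat, eval_zero, hd, ← coeff_zero_eq_eval_zero, h00, h10] at this
    norm_num at this
    linear_combination this
  have hγ2 : (2 * γ - 1) * (3 * γ - 1) = 0 := by
    rw [hr1] at hr2; linear_combination hr2 - hr0
  rcases mul_eq_zero.mp hγ2 with hγ1 | hγ1
  · right
    obtain rfl : γ = 1 / 2 := by linarith
    have hQ0 : polyP1P1.coeff 0 = (1 + C (1 / 2) * X) ^ 2 := by
      rw [coeff_zero_eq_eval_zero, polyP1P1]
      simp only [eval_mul, eval_pow, eval_add, eval_one, eval_C, eval_X]; ring
    have h2 : (2 : ℝ[X]) * C (1 / 2) = 1 := by rw [← C_ofNat, ← C_mul]; norm_num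
    have h0 : p = polyP1P1.coeff 0 := by
      rw [hQ0]
      refine ode_unique hp ?_ ?_
      · simp only [derivative_pow, derivative_add, derivative_one, derivative_mul, derivative_C,
          derivative_X]
        simp only [Nat.cast_ofNat, C_ofNat]
        linear_combination (1 + C (1 / 2) * X) ^ 2 * h2
      · rw [h00, coeff_zero_eq_eval_zero]; simp
    exact h.eq_of_coeff_zero_eq isMA_polyP1P1 h0 (h0 ▸ hpne)
  · left
    obtain rfl : γ = 1 / 3 := by linarith
    have hQ0 : polyP2.coeff 0 = (1 + C (1 / 3) * X) ^ 3 := by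
      rw [coeff_zero_eq_eval_zero, polyP2]
      simp only [eval_mul, eval_pow, eval_add, eval_one, eval_C, eval_X]; ring
    have h3 : (3 : ℝ[X]) * C (1 / 3) = 1 := by rw [← C_ofNat, ← C_mul]; norm_num
    have h0 : p = polyP2.coeff 0 := by
      rw [hQ0]
      refine ode_unique hp ?_ ?_
      · simp only [derivative_pow, derivative_add, derivative_one, derivative_mul, derivative_C,
          derivative_X]
        simp only [Nat.cast_ofNat, C_ofNat]
        linear_combination (1 + C (1 / 3) * X) ^ 3 * h3
      · rw [h00, coeff_zero_eq_eval_zero]; simp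
    exact h.eq_of_coeff_zero_eq isMA_polyP2 h0 (h0 ▸ hpne)

/-! ### Return to functions on `ℝ²` -/

lemma evalEval_polyP2 (x y : ℝ) : evalEval x y polyP2 = (1 + (x + y) / 3) ^ 3 := by
  simp [evalEval, polyP2]; ring

lemma evalEval_polyP1P1 (x y : ℝ) :
    evalEval x y polyP1P1 = (1 + x / 2) ^ 2 * (1 + y / 2) ^ 2 := by
  simp [evalEval, polyP1P1]; ring

/-- A polynomial solution gives a solution of type (★), as soon as it is displayed as a sum of
monomials `g i j * X ^ i * Y ^ j` over a finite set `T` with the positivity and normalization required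
by `IsTypeStar`. -/
lemma exists_isTypeStar_and_satisfiesMA {u : (Fin 2 → ℝ) → ℝ} {P : ℝ[X][X]} (hP : IsMA P)
    (T : Finset (ℕ × ℕ)) (g : ℕ → ℕ → ℝ)
    (hT : ∀ i j, i + j ≤ 1 → (i, j) ∈ T ∧ g i j = 1) (hg : ∀ q ∈ T, 0 < g q.1 q.2)
    (hsum : ∀ x y : ℝ, ∑ q ∈ T, g q.1 q.2 * (x ^ q.1 * y ^ q.2) = evalEval x y P)
    (hu : ∀ x, u x = Real.log (evalEval (Real.exp (x 0)) (Real.exp (x 1)) P) - x 0 - x 1) :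
    (∃ (𝓘 : Finset (Fin 2 → ℕ)) (a : (Fin 2 → ℕ) → ℝ), IsTypeStar u 𝓘 a) ∧ SatisfiesMA u := by
  set 𝓘 : Finset (Fin 2 → ℕ) := T.image fun q => ![q.1, q.2] with h𝓘
  set a : (Fin 2 → ℕ) → ℝ := fun I => g (I 0) (I 1) with ha
  have hexp : ∀ x, expSum 𝓘 a x = evalEval (Real.exp (x 0)) (Real.exp (x 1)) P := by
    intro x
    rw [← hsum, expSum, h𝓘, Finset.sum_image]
    · refine Finset.sum_congr rfl fun q _ => ?_
      simp [ha, Fin.sum_univ_two, Real.exp_add, Real.exp_nat_mul]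
    · intro q _ q' _ hqq
      have h0 := congrFun hqq 0
      have h1 := congrFun hqq 1
      exact Prod.ext h0 h1
  have hstar : IsTypeStar u 𝓘 a := by
    refine ⟨fun I hI => ?_, fun I hI => ?_, fun I hI => ?_, fun x => ?_⟩
    · rw [Fin.sum_univ_two] at hI
      refine Finset.mem_image.mpr ⟨(I 0, I 1), (hT _ _ hI).1, ?_⟩
      ext k; fin_cases k <;> rfl
    · obtain ⟨q, hq, rfl⟩ := Finset.mem_image.mp hI
      exact hg q hq
    · rw [Fin.sum_univ_two] at hI
      exact (hT _ _ hI).2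
    · have := hexp x
      rw [expSum] at this
      rw [this, hu, Fin.sum_univ_two]; ring
  have hpoly : toPoly 𝓘 a = P := by
    refine sub_eq_zero.mp (eq_zero_of_evalEval_exp fun x => ?_)
    rw [evalEval_sub, evalEval_toPoly, hexp, sub_self]
  exact ⟨⟨𝓘, a, hstar⟩, (isMA_toPoly_iff hstar).mpr (hpoly ▸ hP)⟩

lemma u_P2 (x y : ℝ) : Real.log (evalEval (Real.exp x) (Real.exp y) polyP2) =
    3 * Real.log (1 + (Real.exp x + Real.exp y) / 3) := by
  rw [evalEval_polyP2, Real.log_pow]; norm_num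

lemma u_P1P1 (x y : ℝ) : Real.log (evalEval (Real.exp x) (Real.exp y) polyP1P1) =
    2 * Real.log (1 + Real.exp x / 2) + 2 * Real.log (1 + Real.exp y / 2) := by
  rw [evalEval_polyP1P1, Real.log_mul (by positivity) (by positivity), Real.log_pow, Real.log_pow]
  norm_num

/-- the only functions of type (★) on `ℝ²` satisfying `det D²u = e^{−u}` are
`u = 3 log(1 + (e^{x₁}+e^{x₂})/3) − x₁ − x₂` and
`u = 2 log(1 + e^{x₁}/2) + 2 log(1 + e^{x₂}/2) − x₁ − x₂`. -/
theorem stmt15 :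
    (∀ u : (Fin 2 → ℝ) → ℝ,
      ((∀ x, u x =
          3 * Real.log (1 + (Real.exp (x 0) + Real.exp (x 1)) / 3) - x 0 - x 1) ∨
       (∀ x, u x =
          2 * Real.log (1 + Real.exp (x 0) / 2) + 2 * Real.log (1 + Real.exp (x 1) / 2)
            - x 0 - x 1)) →
      (∃ (𝓘 : Finset (Fin 2 → ℕ)) (a : (Fin 2 → ℕ) → ℝ), IsTypeStar u 𝓘 a) ∧
        SatisfiesMA u) ∧
    (∀ (u : (Fin 2 → ℝ) → ℝ) (𝓘 : Finset (Fin 2 → ℕ)) (a : (Fin 2 → ℕ) → ℝ),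
      IsTypeStar u 𝓘 a → SatisfiesMA u →
      (∀ x, u x =
          3 * Real.log (1 + (Real.exp (x 0) + Real.exp (x 1)) / 3) - x 0 - x 1) ∨
      (∀ x, u x =
          2 * Real.log (1 + Real.exp (x 0) / 2) + 2 * Real.log (1 + Real.exp (x 1) / 2)
            - x 0 - x 1)) := by
  refine ⟨fun u hu => ?_, fun u 𝓘 a hstar hMA => ?_⟩
  -- the coefficients used below come from the multinomial expansions of the two polynomials
  · rcases hu with hu | hu
    · refine exists_isTypeStar_and_satisfiesMA isMA_polyP2
        ((Finset.range 4 ×ˢ Finset.range 4).filter fun q => q.1 + q.2 ≤ 3)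
        (fun i j => (Nat.choose 3 (i + j) : ℝ) * (Nat.choose (i + j) i : ℝ) / 3 ^ (i + j))
        ?_ ?_ ?_ fun x => ?_
      · intro i j hij
        obtain ⟨rfl, rfl⟩ | ⟨rfl, rfl⟩ | ⟨rfl, rfl⟩ :
            (i = 0 ∧ j = 0) ∨ (i = 1 ∧ j = 0) ∨ (i = 0 ∧ j = 1) := by omega
        all_goals simp
      · intro q hq
        have h1 : 0 < Nat.choose 3 (q.1 + q.2) := Nat.choose_pos (Finset.mem_filter.mp hq).2
        have h2 : 0 < Nat.choose (q.1 + q.2) q.1 := Nat.choose_pos (Nat.le_add_right _ _)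
        positivity
      · intro x y
        rw [evalEval_polyP2, Finset.sum_filter, Finset.sum_product]
        simp [Finset.sum_range_succ, Nat.choose]
        ring
      · rw [hu, u_P2]
    · refine exists_isTypeStar_and_satisfiesMA isMA_polyP1P1 (Finset.range 3 ×ˢ Finset.range 3)
        (fun i j => (Nat.choose 2 i : ℝ) * (Nat.choose 2 j : ℝ) / 2 ^ (i + j))
        ?_ ?_ ?_ fun x => ?_
      · intro i j hij
        obtain ⟨rfl, rfl⟩ | ⟨rfl, rfl⟩ | ⟨rfl, rfl⟩ :
            (i = 0 ∧ j = 0) ∨ (i = 1 ∧ j = 0) ∨ (i = 0 ∧ j = 1) := by omega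
        all_goals simp
      · intro q hq
        simp only [Finset.mem_product, Finset.mem_range] at hq
        have h1 : 0 < Nat.choose 2 q.1 := Nat.choose_pos (by omega)
        have h2 : 0 < Nat.choose 2 q.2 := Nat.choose_pos (by omega)
        positivity
      · intro x y
        rw [evalEval_polyP1P1, Finset.sum_product]
        simp [Finset.sum_range_succ, Nat.choose]
        ring
      · rw [hu, u_P1P1]
  · have hP := (isMA_toPoly_iff hstar).mp hMA
    have hc : ∀ i j, i + j ≤ 1 → ((toPoly 𝓘 a).coeff j).coeff i = 1 := by
      intro i j hij
      have hI : ∑ k, (![i, j] : Fin 2 → ℕ) k ≤ 1 := by simpa [Fin.sum_univ_two] using hij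
      rw [coeff_toPoly, if_pos (hstar.1 _ hI), hstar.2.2.1 _ hI]
    have hu : ∀ x, u x =
        Real.log (evalEval (Real.exp (x 0)) (Real.exp (x 1)) (toPoly 𝓘 a)) - x 0 - x 1 := by
      intro x
      rw [evalEval_toPoly, hstar.2.2.2 x, Fin.sum_univ_two, expSum]; ring
    rcases hP.classification (hc 0 0 (by simp)) (hc 1 0 (by simp)) (hc 0 1 (by simp)) with h | h
    · left; intro x; rw [hu, h, u_P2]
    · right; intro x; rw [hu, h, u_P1P1]
end
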